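/- Basis property: assume axiom (C0): there exists a regular dominant ρ' ∈ V₀ such that for every λ ∈ Λ₊ there is a unique p ∈ P^W of degree ℓ(λ) with p(ρ'+μ) = δ_{λμ} for all μ ∈ Λ₊ with ℓ(μ) ≤ ℓ(λ). Let ρ ∈ V₀ be dominant. Then for every d ∈ ℕ, the family {p_λ : λ ∈ Λ₊, ℓ(λ) ≤ d} is a ℂ-basis of the space {p ∈ P^W : deg p ≤ d}. -/

import Mathlib

/-
Common framework for F. Knop, "Construction of Commuting Difference Operators
for Multiplicity Free Spaces".

We identify `Γ` with `ι → ℤ` via its basis `Σ` (so `Σ` is the standard basis),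
`Γ^∨` with `ι → ℤ` via the dual basis `Σ^∨`, and `V = Hom(Γ, ℂ)` with `ι → ℂ`.
-/

open scoped BigOperators Classical
open MvPolynomial

noncomputable section

namespace Knop

variable {ι : Type*} [Fintype ι] [DecidableEq ι]

/-- The `i`-th element of the basis `Σ` of `Γ` (resp. of `Σ^∨ ⊆ Γ^∨`), in coordinates. -/
def e (i : ι) : ι → ℤ := Pi.single i 1

/-- The pairing between `Γ` and `Γ^∨` (in coordinates, the dot product);
`pairZ γ η = γ(η) = η(γ)`. -/
def pairZ (γ η : ι → ℤ) : ℤ := ∑ i, γ i * η i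

/-- Evaluation of `γ ∈ Γ` as a linear function on `V = Hom(Γ,ℂ) ≅ ι → ℂ`. -/
def evalC (γ : ι → ℤ) (z : ι → ℂ) : ℂ := ∑ i, (γ i : ℂ) * z i

/-- The embedding `Γ^∨ ⊆ V`. -/
def toV (η : ι → ℤ) : ι → ℂ := fun i => (η i : ℂ)

/-- The action of `w ∈ Aut(Γ)` on `V = Hom(Γ, ℂ)`: `(w • z)(γ) = z(w⁻¹ γ)`, in coordinates. -/
def actV (w : (ι → ℤ) ≃ₗ[ℤ] (ι → ℤ)) (z : ι → ℂ) : ι → ℂ :=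
  fun i => evalC (w.symm (e i)) z

/-- The action of `w ∈ Aut(Γ)` on `Γ^∨ = Hom(Γ, ℤ)`: `(w • η)(γ) = η(w⁻¹ γ)`. -/
def actDual (w : (ι → ℤ) ≃ₗ[ℤ] (ι → ℤ)) (η : ι → ℤ) : ι → ℤ :=
  fun i => pairZ (w.symm (e i)) η

/-- `Λ₊`, the `ℕ`-span of `Σ^∨` inside `Γ^∨`. -/
def LamPlus : Set (ι → ℤ) := {η | ∀ i, 0 ≤ η i}

/-- The reflection `s_α(x) = x - α^∨(x)·α` attached to a root `α` with coroot `αv`. -/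
def reflMap (α αv : ι → ℤ) : (ι → ℤ) → (ι → ℤ) := fun x => x - pairZ x αv • α

/-- The data `(Γ, Σ, W, ℓ)` together with the axioms C1–C8 of Knop's paper
(in the coordinates given by `Σ`).  The root system `Δ` of `W`, the set
`Φ = W·Σ`, and `Λ₁ = W·Σ^∨₁` are carried along as `Finset`s with their
defining specifications. -/
structure Data (ι : Type*) [Fintype ι] [DecidableEq ι] where
  /-- the reflection group `W ⊆ Aut(Γ)` -/
  W : Subgroup ((ι → ℤ) ≃ₗ[ℤ] (ι → ℤ))
  /-- `W` is finite -/
  W_finite : (W : Set ((ι → ℤ) ≃ₗ[ℤ] (ι → ℤ))).Finite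
  /-- the element `ℓ ∈ Γ` -/
  ell : ι → ℤ
  /-- the set of roots `Δ ⊆ Γ` of `W` -/
  Δ : Finset (ι → ℤ)
  /-- the coroot `α^∨ ∈ Γ^∨` of a root `α` -/
  coroot : (ι → ℤ) → (ι → ℤ)
  /-- `Φ = W·Σ` -/
  Φ : Finset (ι → ℤ)
  /-- `Λ₁ = W·Σ^∨₁` -/
  Λ₁ : Finset (ι → ℤ)
  Φ_spec : ∀ ω, ω ∈ Φ ↔ ∃ w ∈ W, ∃ i, ω = w (e i)
  Λ₁_spec : ∀ η, η ∈ Λ₁ ↔ ∃ w ∈ W, ∃ i, ell i = 1 ∧ η = actDual w (e i)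
  /-- `Δ = -Δ` -/
  Δ_neg : ∀ α ∈ Δ, -α ∈ Δ
  /-- every root is a primitive vector of `Γ` -/
  Δ_prim : ∀ α ∈ Δ, ∀ (n : ℤ) (β : ι → ℤ), α = n • β → IsUnit n
  /-- the reflection `s_α` belongs to `W` -/
  refl_mem : ∀ α ∈ Δ, ∃ w ∈ W, ∀ x, w x = reflMap α (coroot α) x
  /-- `α^∨(α) = 2` -/
  coroot_pair : ∀ α ∈ Δ, pairZ α (coroot α) = 2
  /-- C1: `W` is generated by the reflections `s_α`, `α ∈ Δ` -/
  C1 : W ≤ Subgroup.closure {w : (ι → ℤ) ≃ₗ[ℤ] (ι → ℤ) |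
        ∃ α ∈ Δ, ∀ x, w x = reflMap α (coroot α) x}
  /-- C2: `Δ = Δ⁺ ∪ (-Δ⁺)` -/
  C2 : ∀ α ∈ Δ, (∀ i, 0 ≤ α i) ∨ (∀ i, α i ≤ 0)
  /-- C3: `Φ ⊆ Φ⁺ ∪ (-Φ⁺)` -/
  C3 : ∀ ω ∈ Φ, (∀ i, 0 ≤ ω i) ∨ (∀ i, ω i ≤ 0)
  /-- C4: `ℓ ∈ Γ^W` -/
  C4 : ∀ w ∈ W, w ell = ell
  /-- C5: `Σ_{ω ∈ Φ⁺} ω - Σ_{α ∈ Δ⁺} α = ℓ` -/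
  C5 : (∑ ω ∈ Φ.filter (fun ω => ∀ i, 0 ≤ ω i), ω)
        - (∑ α ∈ Δ.filter (fun α => ∀ i, 0 ≤ α i), α) = ell
  /-- C6: `ℓ(η) > 0` for all `η ∈ Σ^∨` -/
  C6 : ∀ i, 0 < ell i
  /-- C7: `ω(η) ∈ {-1,0,1}` for `η ∈ Σ^∨₁` and `ω ∈ Δ ∪ Φ` -/
  C7 : ∀ i, ell i = 1 → ∀ ω, (ω ∈ Δ ∨ ω ∈ Φ) → ω i = -1 ∨ ω i = 0 ∨ ω i = 1
  /-- C8: a `W`-invariant linear function on `V` is determined by its restriction to `Σ^∨₁` -/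
  C8 : ∀ c c' : ι → ℂ,
    (∀ w ∈ W, ∀ z : ι → ℂ, ∑ i, c i * actV w z i = ∑ i, c i * z i) →
    (∀ w ∈ W, ∀ z : ι → ℂ, ∑ i, c' i * actV w z i = ∑ i, c' i * z i) →
    (∀ i, ell i = 1 → c i = c' i) → c = c'

namespace Data

variable (D : Data ι)

/-- `Δ⁺`, the positive roots. -/
def Δpos : Finset (ι → ℤ) := D.Δ.filter fun α => ∀ i, 0 ≤ α i

/-- `Φ⁺`. -/
def Φpos : Finset (ι → ℤ) := D.Φ.filter fun ω => ∀ i, 0 ≤ ω i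

/-- The submonoid `Λ` of `Γ^∨` generated by `Λ₁`. -/
def Lam : AddSubmonoid (ι → ℤ) := AddSubmonoid.closure (D.Λ₁ : Set (ι → ℤ))

/-- `ρ ∈ V₀`: `ω₁(ρ) = ω₂(ρ)` whenever `ω₁, ω₂ ∈ Σ` lie in the same `±W`-orbit. -/
def InV0 (ρ : ι → ℂ) : Prop :=
  ∀ i j : ι, (∃ w ∈ D.W, e i = w (e j) ∨ e i = -(w (e j))) → ρ i = ρ j

/-- `k` is the multiplicity-parameter function of `ρ ∈ V₀`:
`k_ω = ω₁(ρ)` for any `ω₁ ∈ (±W)·ω ∩ Σ`. -/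
def IsK (ρ : ι → ℂ) (k : (ι → ℤ) → ℂ) : Prop :=
  ∀ (ω : ι → ℤ) (i : ι), (∃ w ∈ D.W, e i = w ω ∨ e i = -(w ω)) → k ω = ρ i

/-- `ρ` is dominant: `α(ρ) ∉ {-1,-2,…}` for all `α ∈ Δ⁺`. -/
def Dominant (ρ : ι → ℂ) : Prop :=
  ∀ α ∈ D.Δpos, ∀ n : ℕ, evalC α ρ ≠ -((n : ℂ) + 1)

/-- `ρ` is regular: `α(ρ) ≠ 0` for all `α ∈ Δ⁺`. -/
def Regular (ρ : ι → ℂ) : Prop :=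
  ∀ α ∈ D.Δpos, evalC α ρ ≠ 0

/-- `ρ` is non-integral: `α(ρ) ∉ ℤ` for all `α ∈ Δ`. -/
def NonIntegral (ρ : ι → ℂ) : Prop :=
  ∀ α ∈ D.Δ, ∀ n : ℤ, evalC α ρ ≠ (n : ℂ)

/-- `ρ` is strongly dominant (`k` being the parameter function of `ρ`). -/
def StronglyDominant (ρ : ι → ℂ) (k : (ι → ℤ) → ℂ) : Prop :=
  D.Regular ρ ∧ D.Dominant ρ ∧
    ∀ ω ∈ D.Φpos, (∀ n : ℕ, evalC ω ρ - k ω ≠ -((n : ℂ) + 1)) ∧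
      (∀ n : ℕ, evalC ω ρ + k ω ≠ -(n : ℂ))

/-- The rational function `f_η`, `η ∈ Λ₁`. -/
def f (k : (ι → ℤ) → ℂ) (η : ι → ℤ) (z : ι → ℂ) : ℂ :=
  (∏ ω ∈ D.Φ.filter (fun ω => 0 < pairZ ω η), (evalC ω z - k ω)) /
  (∏ α ∈ D.Δ.filter (fun α => 0 < pairZ α η), evalC α z)

/-- The value at `z` of `L(p) = Σ_{η ∈ Λ₁} f_η T_η (p)`. -/
def Lval (k : (ι → ℤ) → ℂ) (p : MvPolynomial ι ℂ) (z : ι → ℂ) : ℂ :=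
  ∑ η ∈ D.Λ₁, D.f k η z * eval (z - toV η) p

/-- `W`-invariance of a polynomial function on `V`. -/
def WInv (p : MvPolynomial ι ℂ) : Prop :=
  ∀ w ∈ D.W, ∀ z : ι → ℂ, eval (actV w z) p = eval z p

/-- The defining property of the Capelli polynomial `p_λ` (with shift `ρ`):
`p` is `W`-invariant of degree `≤ ℓ(λ)` and `p(ρ+μ) = δ_{λμ}` for all
`μ ∈ Λ₊` with `ℓ(μ) ≤ ℓ(λ)`. -/
def CapelliAt (ρ : ι → ℂ) (lam : ι → ℤ) (p : MvPolynomial ι ℂ) : Prop :=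
  D.WInv p ∧ (p.totalDegree : ℤ) ≤ pairZ D.ell lam ∧
    ∀ μ : ι → ℤ, μ ∈ LamPlus → pairZ D.ell μ ≤ pairZ D.ell lam →
      eval (ρ + toV μ) p = if μ = lam then 1 else 0

/-- Axiom C0: for some regular dominant `ρ' ∈ V₀` and every `λ ∈ Λ₊` there is a
unique `W`-invariant polynomial of degree `ℓ(λ)` with `p(ρ'+μ) = δ_{λμ}` for all
`μ ∈ Λ₊` with `ℓ(μ) ≤ ℓ(λ)`. -/
def C0 : Prop :=
  ∃ ρ' : ι → ℂ, D.InV0 ρ' ∧ D.Regular ρ' ∧ D.Dominant ρ' ∧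
    ∀ lam : ι → ℤ, lam ∈ LamPlus →
      ∃! p : MvPolynomial ι ℂ, D.WInv p ∧
        p.totalDegree = (pairZ D.ell lam).toNat ∧
        ∀ μ : ι → ℤ, μ ∈ LamPlus → pairZ D.ell μ ≤ pairZ D.ell lam →
          eval (ρ' + toV μ) p = if μ = lam then 1 else 0

end Data

/-- The `m`-th point `τ_m` of the path starting at `lam` with step sequence `s`
(steps are meant to lie in `Λ₁`). -/
def pathPt (lam : ι → ℤ) {d : ℕ} (s : Fin d → ι → ℤ) (m : ℕ) : ι → ℤ :=
  lam + ∑ i ∈ Finset.univ.filter (fun i : Fin d => (i : ℕ) < m), s i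

/-- All paths of length `d` from `lam` to `mu` (with steps in `Λ₁`), encoded by
their step sequences. -/
def paths (D : Data ι) (lam mu : ι → ℤ) (d : ℕ) : Finset (Fin d → ι → ℤ) :=
  (Fintype.piFinset fun _ : Fin d => D.Λ₁).filter fun s => pathPt lam s d = mu

/-- All positive paths of length `d` from `lam` to `mu`. -/
def posPaths (D : Data ι) (lam mu : ι → ℤ) (d : ℕ) : Finset (Fin d → ι → ℤ) :=
  (Fintype.piFinset fun _ : Fin d => D.Λ₁).filter fun s =>
    (∀ m ≤ d, pathPt lam s m ∈ LamPlus) ∧ pathPt lam s d = mu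

/-- The falling factorial `[x ↓ d] = x(x-1)⋯(x-d+1)`. -/
def ffall (x : ℂ) (d : ℤ) : ℂ := ∏ j ∈ Finset.range d.toNat, (x - (j : ℂ))

namespace Data

variable (D : Data ι)

/-- The generalized rational function `f_τ`, `τ ∈ Λ` (formula (Def-f-l)). -/
def fgen (k : (ι → ℤ) → ℂ) (τ : ι → ℤ) (z : ι → ℂ) : ℂ :=
  (∏ ω ∈ D.Φ.filter (fun ω => 0 < pairZ ω τ), ffall (evalC ω z - k ω) (pairZ ω τ)) /
  (∏ α ∈ D.Δ.filter (fun α => 0 < pairZ α τ), ffall (evalC α z) (pairZ α τ))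

/-- The virtual dimension `d_λ = (-1)^{ℓ(λ)} f_λ(-ρ) / f_λ(ρ+λ)`. -/
def vdim (k : (ι → ℤ) → ℂ) (ρ : ι → ℂ) (lam : ι → ℤ) : ℂ :=
  (-1 : ℂ) ^ (pairZ D.ell lam) * D.fgen k lam (-ρ) / D.fgen k lam (ρ + toV lam)

/-- The rational function `b_τ^h` (formula (Def-b-t)); here the sum runs over
all paths from `0` to `τ` of length `d = ℓ(τ)`. -/
def bfun (k : (ι → ℤ) → ℂ) (h : MvPolynomial ι ℂ) (τ : ι → ℤ) (z : ι → ℂ) : ℂ :=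
  ∑ s ∈ paths D 0 τ (pairZ D.ell τ).toNat,
    (∑ i ∈ Finset.range ((pairZ D.ell τ).toNat + 1),
      ((-1 : ℂ) ^ ((pairZ D.ell τ).toNat - i) /
        ((Nat.factorial i : ℂ) * (Nat.factorial ((pairZ D.ell τ).toNat - i) : ℂ))) *
        eval (z - toV (pathPt 0 s i)) h) *
    ∏ i : Fin (pairZ D.ell τ).toNat, D.fgen k (s i) (z - toV (pathPt 0 s (i : ℕ)))

/-- The difference operator `D_h = Σ_{τ ∈ Λ} b_τ^h T_τ`, acting on functions on `V`. -/
def Dop (k : (ι → ℤ) → ℂ) (h : MvPolynomial ι ℂ) (F : (ι → ℂ) → ℂ) (z : ι → ℂ) : ℂ :=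
  ∑ᶠ τ ∈ (D.Lam : Set (ι → ℤ)), D.bfun k h τ z * F (z - toV τ)

/-- The order relation on `Λ`: `τ₁ ≤ τ₂` iff `ℓ(τ₁) < ℓ(τ₂)`, or
`ℓ(τ₁) = ℓ(τ₂)` and `τ₂ - τ₁` is a sum of positive coroots. -/
def ordLe (τ₁ τ₂ : ι → ℤ) : Prop :=
  pairZ D.ell τ₁ < pairZ D.ell τ₂ ∨
    (pairZ D.ell τ₁ = pairZ D.ell τ₂ ∧
      τ₂ - τ₁ ∈ AddSubmonoid.closure (D.coroot '' (D.Δpos : Set (ι → ℤ))))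

end Data

/-!
Ordering `Λ₊` by `ℓ`, the conditions `p_λ(ρ+μ) = δ_{λμ}` are triangular, so the `p_λ` are linearly
independent. For spanning it remains to bound the dimension of the space of invariants of degree at
most `d` by the number of `λ ∈ Λ₊` with `ℓ(λ) ≤ d`, and this is where C0 enters: evaluation at the
points `ρ'+μ`, `ℓ(μ) ≤ d`, is injective on that space. Indeed, if `Γ ≠ 0`, then C8 provides an
`η ∈ Σ^∨` with `ℓ(η) = 1`, so `λ = dη ∈ Λ₊` has `ℓ(λ) = d`. If `q` vanishes at all these points and
`p` is the polynomial that C0 attaches to `λ`, then one of `p + q`, `p - q` still has degree `d`,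
hence equals `p` by uniqueness.
-/

theorem linearIndependent_of_triangular {κ α R M : Type*} [LinearOrder α] [Ring R]
    [NoZeroDivisors R] [AddCommGroup M] [Module R M] {v : κ → M} (φ : κ → M →ₗ[R] R) (h : κ → α)
    (hdiag : ∀ i, φ i (v i) ≠ 0) (hoff : ∀ i j, i ≠ j → h i ≤ h j → φ i (v j) = 0) :
    LinearIndependent R v := by
  rw [linearIndependent_iff]
  intro l hl
  by_contra hl0
  obtain ⟨i, hi, hmin⟩ := l.support.exists_min_image h (Finsupp.support_nonempty_iff.mpr hl0)
  have hφ : φ i (Finsupp.linearCombination R v l) = l i * φ i (v i) := by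
    rw [Finsupp.linearCombination_apply, map_finsuppSum, Finsupp.sum,
      Finset.sum_eq_single_of_mem i hi fun j hj hji => by
        rw [map_smul, hoff i j hji.symm (hmin j hj), smul_zero],
      map_smul, smul_eq_mul]
  rw [hl, map_zero] at hφ
  exact mul_ne_zero (Finsupp.mem_support_iff.mp hi) (hdiag i) hφ.symm

theorem span_range_eq_of_injective_pi {κ K M : Type*} [Finite κ] [DivisionRing K] [AddCommGroup M]
    [Module K M] {U : Submodule K M} {f : U →ₗ[K] κ → K} (hf : Function.Injective f) {v : κ → M}
    (hv : LinearIndependent K v) (hvU : ∀ i, v i ∈ U) :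
    Submodule.span K (Set.range v) = U := by
  have := Fintype.ofFinite κ
  have : Module.Finite K U := Module.Finite.of_injective f hf
  refine Submodule.eq_of_le_of_finrank_le (Submodule.span_le.mpr (Set.range_subset_iff.mpr hvU)) ?_
  calc Module.finrank K U ≤ Module.finrank K (κ → K) := f.finrank_le_finrank_of_injective hf
    _ = Fintype.card κ := Module.finrank_fintype_fun_eq_card K
    _ = Module.finrank K (Submodule.span K (Set.range v)) := (finrank_span_eq_card hv).symm

theorem totalDegree_add_eq_or_totalDegree_sub_eq {σ R : Type*} [CommRing R] [NoZeroDivisors R]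
    [NeZero (2 : R)] {p q : MvPolynomial σ R} (hqp : q.totalDegree ≤ p.totalDegree) :
    (p + q).totalDegree = p.totalDegree ∨ (p - q).totalDegree = p.totalDegree := by
  have : Nontrivial R := nontrivial_of_ne 2 0 two_ne_zero
  have : IsDomain R := {}
  have hadd : (p + q).totalDegree ≤ p.totalDegree :=
    (totalDegree_add p q).trans (max_le le_rfl hqp)
  have hsub : (p - q).totalDegree ≤ p.totalDegree :=
    (totalDegree_sub p q).trans (max_le le_rfl hqp)
  have htwo : p.totalDegree ≤ max (p + q).totalDegree (p - q).totalDegree := by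
    calc p.totalDegree = ((2 : R) • p).totalDegree := by
          simp only [totalDegree, support_smul_eq (two_ne_zero : (2 : R) ≠ 0)]
      _ = ((p + q) + (p - q)).totalDegree := by rw [two_smul, add_add_sub_cancel]
      _ ≤ _ := totalDegree_add _ _
  exact (le_max_iff.mp htwo).imp hadd.antisymm hsub.antisymm

theorem evalC_actV (γ : ι → ℤ) (w : (ι → ℤ) ≃ₗ[ℤ] (ι → ℤ)) (z : ι → ℂ) :
    evalC γ (actV w z) = evalC (w.symm γ) z := by
  have hγ : w.symm γ = ∑ i, γ i • w.symm (e i) := by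
    conv_lhs => rw [pi_eq_sum_univ' γ]
    simp only [map_sum, map_smul]
    rfl
  simp only [evalC, actV, hγ, Finset.sum_apply, Pi.smul_apply, smul_eq_mul, Int.cast_sum,
    Int.cast_mul, Finset.sum_mul, Finset.mul_sum, mul_assoc]
  exact Finset.sum_comm

namespace Data

variable (D : Data ι)

/-- The algebra `P^W` of `W`-invariant polynomial functions on `V`. -/
def invariants : Subalgebra ℂ (MvPolynomial ι ℂ) where
  carrier := {p | D.WInv p}
  mul_mem' hp hq w hw z := by rw [map_mul, map_mul, hp w hw z, hq w hw z]
  add_mem' hp hq w hw z := by rw [map_add, map_add, hp w hw z, hq w hw z]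
  algebraMap_mem' c w _ z := by rw [algebraMap_eq, eval_C, eval_C]

/-- The space `{p ∈ P^W : deg p ≤ d}`. -/
def invariantsLE (d : ℕ) : Submodule ℂ (MvPolynomial ι ℂ) :=
  Subalgebra.toSubmodule D.invariants ⊓ restrictTotalDegree ι ℂ d

/-- The set `{λ ∈ Λ₊ : ℓ(λ) ≤ d}`, which indexes the basis of `D.invariantsLE d`. -/
def lamPlusLE (d : ℕ) : Set (ι → ℤ) := {lam | lam ∈ LamPlus ∧ pairZ D.ell lam ≤ d}

/-- The interpolation property that axiom C0 requires of its shift: for every `λ ∈ Λ₊` there is a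
unique invariant of degree exactly `ℓ(λ)` taking the values `δ_{λμ}` at `ρ + μ`, `ℓ(μ) ≤ ℓ(λ)`. -/
def UniquelyInterpolates (ρ : ι → ℂ) : Prop :=
  ∀ lam : ι → ℤ, lam ∈ LamPlus →
    ∃! p : MvPolynomial ι ℂ, D.WInv p ∧
      p.totalDegree = (pairZ D.ell lam).toNat ∧
      ∀ μ : ι → ℤ, μ ∈ LamPlus → pairZ D.ell μ ≤ pairZ D.ell lam →
        eval (ρ + toV μ) p = if μ = lam then 1 else 0

/-- The restriction of the invariants of degree at most `d` to the points `ρ + μ`, `μ ∈ Λ₊`,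
`ℓ(μ) ≤ d`. -/
def evalLamPlusLE (ρ : ι → ℂ) (d : ℕ) : D.invariantsLE d →ₗ[ℂ] D.lamPlusLE d → ℂ :=
  LinearMap.pi fun μ => (aeval (ρ + toV μ.1)).toLinearMap ∘ₗ (D.invariantsLE d).subtype

variable {D}

theorem mem_invariantsLE {d : ℕ} {p : MvPolynomial ι ℂ} :
    p ∈ D.invariantsLE d ↔ D.WInv p ∧ p.totalDegree ≤ d := by
  rw [invariantsLE, Submodule.mem_inf, mem_restrictTotalDegree]
  rfl

variable (D)

theorem evalC_ell_actV {w : (ι → ℤ) ≃ₗ[ℤ] (ι → ℤ)} (hw : w ∈ D.W) (z : ι → ℂ) :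
    evalC D.ell (actV w z) = evalC D.ell z := by
  rw [evalC_actV, (LinearEquiv.symm_apply_eq w).mpr (D.C4 w hw).symm]

theorem exists_ell_eq_one [Nonempty ι] : ∃ i, D.ell i = 1 := by
  by_contra! hell
  -- C8 identifies `ℓ` with the zero function, contradicting C6.
  have hzero := D.C8 (fun i => D.ell i) 0 (fun w hw z => D.evalC_ell_actV hw z)
    (fun _ _ _ => by simp only [Pi.zero_apply, zero_mul]) fun i hi => absurd hi (hell i)
  obtain ⟨i⟩ := ‹Nonempty ι›
  exact (D.C6 i).ne' (Int.cast_eq_zero.mp (congrFun hzero i))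

theorem exists_mem_LamPlus_pairZ_ell_eq [Nonempty ι] (d : ℕ) :
    ∃ lam ∈ LamPlus, pairZ D.ell lam = d := by
  obtain ⟨i, hi⟩ := D.exists_ell_eq_one
  have hnonneg : (0 : ι → ℤ) ≤ Pi.single i (d : ℤ) := Pi.single_nonneg.mpr d.cast_nonneg
  refine ⟨Pi.single i (d : ℤ), hnonneg, ?_⟩
  rw [pairZ, ← dotProduct, dotProduct_single, hi, one_mul]

theorem finite_lamPlusLE (d : ℕ) : (D.lamPlusLE d).Finite := by
  refine (Set.finite_Icc (0 : ι → ℤ) fun _ => (d : ℤ)).subset fun lam hlam => ⟨hlam.1, fun i => ?_⟩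
  calc lam i ≤ D.ell i * lam i := le_mul_of_one_le_left (hlam.1 i) (D.C6 i)
    _ ≤ pairZ D.ell lam := Finset.single_le_sum (f := fun j => D.ell j * lam j)
        (fun j _ => mul_nonneg (D.C6 j).le (hlam.1 j)) (Finset.mem_univ i)
    _ ≤ d := hlam.2

variable {D}

theorem UniquelyInterpolates.eq_zero {ρ : ι → ℂ} (hρ : D.UniquelyInterpolates ρ) {d : ℕ}
    {q : MvPolynomial ι ℂ} (hq : q ∈ D.invariantsLE d)
    (hvan : ∀ μ ∈ D.lamPlusLE d, eval (ρ + toV μ) q = 0) : q = 0 := by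
  obtain ⟨hqW, hqd⟩ := mem_invariantsLE.mp hq
  cases isEmpty_or_nonempty ι with
  | inl _ =>
    have heval := hvan 0 ⟨fun _ => le_rfl, by simp [pairZ]⟩
    rw [eq_C_of_isEmpty q, eval_C] at heval
    rw [eq_C_of_isEmpty q, heval, C_0]
  | inr _ =>
    obtain ⟨lam, hlam, hell⟩ := D.exists_mem_LamPlus_pairZ_ell_eq d
    obtain ⟨p, ⟨hpW, hpd, hpv⟩, hunique⟩ := hρ lam hlam
    rw [hell] at hpd hpv hunique
    have hvan' : ∀ μ ∈ LamPlus, pairZ D.ell μ ≤ d → eval (ρ + toV μ) q = 0 :=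
      fun μ hμ hμd => hvan μ ⟨hμ, hμd⟩
    rcases totalDegree_add_eq_or_totalDegree_sub_eq (hqd.trans hpd.ge) with hdeg | hdeg
    · refine add_eq_left.mp (hunique (p + q) ⟨D.invariants.add_mem hpW hqW, hdeg.trans hpd, ?_⟩)
      intro μ hμ hμd
      rw [map_add, hvan' μ hμ hμd, add_zero, hpv μ hμ hμd]
    · refine sub_eq_self.mp (hunique (p - q) ⟨D.invariants.sub_mem hpW hqW, hdeg.trans hpd, ?_⟩)
      intro μ hμ hμd
      rw [map_sub, hvan' μ hμ hμd, sub_zero, hpv μ hμ hμd]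

theorem UniquelyInterpolates.evalLamPlusLE_injective {ρ : ι → ℂ} (hρ : D.UniquelyInterpolates ρ)
    (d : ℕ) : Function.Injective (D.evalLamPlusLE ρ d) := by
  rw [injective_iff_map_eq_zero]
  exact fun q hq => Subtype.ext (hρ.eq_zero q.2 fun μ hμ => congrFun hq ⟨μ, hμ⟩)

theorem CapelliAt.mem_invariantsLE {ρ : ι → ℂ} {lam : ι → ℤ} {p : MvPolynomial ι ℂ}
    (hp : D.CapelliAt ρ lam p) {d : ℕ} (hlam : pairZ D.ell lam ≤ d) : p ∈ D.invariantsLE d :=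
  Data.mem_invariantsLE.mpr ⟨hp.1, Int.ofNat_le.mp (hp.2.1.trans hlam)⟩

theorem linearIndependent_of_capelliAt {ρ : ι → ℂ} {pl : (ι → ℤ) → MvPolynomial ι ℂ}
    {S : Set (ι → ℤ)} (hS : S ⊆ LamPlus) (hpl : ∀ lam ∈ S, D.CapelliAt ρ lam (pl lam)) :
    LinearIndependent ℂ fun lam : S => pl lam := by
  have heval (μ lam : S) (hle : pairZ D.ell μ ≤ pairZ D.ell lam) :
      aeval (ρ + toV μ.1) (pl lam) = if μ.1 = lam then (1 : ℂ) else 0 :=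
    (hpl lam lam.2).2.2 μ (hS μ.2) hle
  refine linearIndependent_of_triangular (fun μ : S => (aeval (ρ + toV μ.1)).toLinearMap)
    (fun μ => pairZ D.ell μ) (fun μ => ?_) fun μ lam hne hle => ?_
  · rw [AlgHom.toLinearMap_apply, heval μ μ le_rfl, if_pos rfl]
    exact one_ne_zero
  · rw [AlgHom.toLinearMap_apply, heval μ lam hle, if_neg (Subtype.coe_ne_coe.mpr hne)]

end Data

theorem statement5_general (D : Data ι) {ρ' : ι → ℂ} (hρ' : D.UniquelyInterpolates ρ')
    (ρ : ι → ℂ) (d : ℕ) (pl : (ι → ℤ) → MvPolynomial ι ℂ)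
    (hpl : ∀ lam ∈ D.lamPlusLE d, D.CapelliAt ρ lam (pl lam)) :
    LinearIndependent ℂ (fun lam : D.lamPlusLE d => pl lam) ∧
      Submodule.span ℂ (pl '' D.lamPlusLE d) = D.invariantsLE d := by
  have hli := Data.linearIndependent_of_capelliAt (fun _ hlam => hlam.1) hpl
  have : Finite (D.lamPlusLE d) := D.finite_lamPlusLE d
  refine ⟨hli, ?_⟩
  rw [Set.image_eq_range]
  exact span_range_eq_of_injective_pi (hρ'.evalLamPlusLE_injective d) hli
    fun lam => (hpl lam lam.2).mem_invariantsLE lam.2.2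

/-- Theorem 2.6 b: assuming axiom C0, for dominant `ρ ∈ V₀` and
every `d ∈ ℕ` the family `{p_λ : λ ∈ Λ₊, ℓ(λ) ≤ d}` is a basis of
`{p ∈ P^W : deg p ≤ d}`: it is linearly independent and spans that space. -/
theorem statement5 (D : Data ι) (hC0 : D.C0)
    (ρ : ι → ℂ) (hρ : D.InV0 ρ) (hdom : D.Dominant ρ)
    (pl : (ι → ℤ) → MvPolynomial ι ℂ)
    (hpl : ∀ lam : ι → ℤ, lam ∈ LamPlus → D.CapelliAt ρ lam (pl lam))
    (d : ℕ) :
    LinearIndependent ℂ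
      (fun x : {lam : ι → ℤ // lam ∈ LamPlus ∧ pairZ D.ell lam ≤ (d : ℤ)} => pl x.1) ∧
    ∀ p : MvPolynomial ι ℂ, D.WInv p → p.totalDegree ≤ d →
      p ∈ Submodule.span ℂ
        (pl '' {lam : ι → ℤ | lam ∈ LamPlus ∧ pairZ D.ell lam ≤ (d : ℤ)}) := by
  obtain ⟨ρ', -, -, -, hρ'⟩ := hC0
  obtain ⟨hli, hspan⟩ := statement5_general D hρ' ρ d pl fun lam hlam => hpl lam hlam.1
  exact ⟨hli, fun p hpW hpd => hspan.ge (Data.mem_invariantsLE.mpr ⟨hpW, hpd⟩)⟩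

end Knop

end
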